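/- Let φ : ℝ³ → ℝ be smooth, harmonic (∂²φ/∂x² + ∂²φ/∂y² + ∂²φ/∂z² = 0 everywhere), 2π-periodic in y and in z, and suppose ∫₀^{2π} φ(x,y,z) dz = 0 for all (x,y) ∈ ℝ². Then there exists a smooth harmonic function H : ℝ³ → ℝ, 2π-periodic in y and in z, such that ∂H/∂z = φ everywhere and ∫₀^{2π} H(x,y,z) dz = 0 for all (x,y). -/

import Mathlib

noncomputable section

/-- Partial derivative with respect to the first coordinate `x` of `ℝ × ℝ × ℝ`. -/
def pdx (f : ℝ × ℝ × ℝ → ℝ) (p : ℝ × ℝ × ℝ) : ℝ := fderiv ℝ f p (1, 0, 0)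

/-- Partial derivative with respect to the second coordinate `y` of `ℝ × ℝ × ℝ`. -/
def pdy (f : ℝ × ℝ × ℝ → ℝ) (p : ℝ × ℝ × ℝ) : ℝ := fderiv ℝ f p (0, 1, 0)

/-- Partial derivative with respect to the third coordinate `z` of `ℝ × ℝ × ℝ`. -/
def pdz (f : ℝ × ℝ × ℝ → ℝ) (p : ℝ × ℝ × ℝ) : ℝ := fderiv ℝ f p (0, 0, 1)

/-- Directional derivative. -/
def ddir (v : ℝ × ℝ × ℝ) (f : ℝ × ℝ × ℝ → ℝ) (p : ℝ × ℝ × ℝ) : ℝ := fderiv ℝ f p v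

lemma ddir_smooth (v : ℝ × ℝ × ℝ) {f : ℝ × ℝ × ℝ → ℝ} (hf : ContDiff ℝ (⊤ : ℕ∞) f) :
    ContDiff ℝ (⊤ : ℕ∞) (ddir v f) := by
  have h := (contDiff_infty_iff_fderiv.1 hf).2
  exact h.clm_apply contDiff_const

lemma ddir_comm (v w : ℝ × ℝ × ℝ) {f : ℝ × ℝ × ℝ → ℝ} (hf : ContDiff ℝ (⊤ : ℕ∞) f) :
    ddir v (ddir w f) = ddir w (ddir v f) := by
  funext p
  have h := (contDiff_infty_iff_fderiv.1 hf).2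
  have hd : DifferentiableAt ℝ (fderiv ℝ f) p :=
    (contDiff_infty_iff_fderiv.1 h).1 p
  have key : ∀ a b : ℝ × ℝ × ℝ, ddir a (ddir b f) p = fderiv ℝ (fderiv ℝ f) p a b := by
    intro a b
    have h1 : HasFDerivAt (fun q => fderiv ℝ f q b) _ p :=
      hd.hasFDerivAt.clm_apply (hasFDerivAt_const b p)
    have h2 : fderiv ℝ (ddir b f) p = _ := h1.fderiv
    unfold ddir at h2 ⊢
    rw [h2]
    simp
  rw [key, key]
  refine (hf.contDiffAt (x := p)).isSymmSndFDerivAt ?_ v w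
  simp only [minSmoothness_of_isRCLikeNormedField]
  exact WithTop.coe_le_coe.2 (le_top : (2 : ℕ∞) ≤ ⊤)

lemma hasFDerivAt_param {E G : Type} [NormedAddCommGroup E] [NormedSpace ℝ E] [ProperSpace E]
    [NormedAddCommGroup G] [NormedSpace ℝ G] (F : E × ℝ → G) (hF : ContDiff ℝ 1 F)
    (a b : ℝ) (x₀ : E) :
    HasFDerivAt (fun x => ∫ t in a..b, F (x, t))
      (∫ t in a..b, (fderiv ℝ F (x₀, t)).comp (ContinuousLinearMap.inl ℝ E ℝ)) x₀ := by
  have hc : Continuous F := hF.continuous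
  have hc' : Continuous (fun q : E × ℝ =>
      (fderiv ℝ F q).comp (ContinuousLinearMap.inl ℝ E ℝ)) :=
    (hF.continuous_fderiv one_ne_zero).clm_comp continuous_const
  obtain ⟨C, hC⟩ := ((isCompact_closedBall x₀ 1).prod (isCompact_uIcc (a := a) (b := b))).exists_bound_of_continuousOn
    hc'.continuousOn
  refine intervalIntegral.hasFDerivAt_integral_of_dominated_of_fderiv_le
    (F := fun x t => F (x, t)) (s := Metric.closedBall x₀ 1) (bound := fun _ => C)
    (F' := fun x t => (fderiv ℝ F (x, t)).comp (ContinuousLinearMap.inl ℝ E ℝ))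
    (Metric.closedBall_mem_nhds x₀ one_pos) ?_ ?_ ?_ ?_ ?_ ?_
  · refine Filter.Eventually.of_forall fun x => ?_
    exact (hc.comp (by fun_prop : Continuous fun t : ℝ => (x, t))).aestronglyMeasurable
  · exact (hc.comp (by fun_prop : Continuous fun t : ℝ => (x₀, t))).intervalIntegrable _ _
  · exact (hc'.comp (by fun_prop : Continuous fun t : ℝ => (x₀, t))).aestronglyMeasurable
  · refine Filter.Eventually.of_forall fun t ht x hx => ?_
    exact hC (x, t) ⟨hx, Set.uIoc_subset_uIcc ht⟩
  · exact intervalIntegrable_const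
  · refine Filter.Eventually.of_forall fun t ht x hx => ?_
    have h1 : HasFDerivAt F (fderiv ℝ F (x, t)) (x, t) :=
      (hF.differentiable one_ne_zero (x, t)).hasFDerivAt
    exact h1.comp x (hasFDerivAt_prodMk_left x t)

lemma contDiff_param_nat {E : Type} [NormedAddCommGroup E] [NormedSpace ℝ E] [ProperSpace E]
    (a b : ℝ) (n : ℕ) : ∀ {G : Type} [NormedAddCommGroup G] [NormedSpace ℝ G]
    (F : E × ℝ → G), ContDiff ℝ (⊤ : ℕ∞) F → ContDiff ℝ n (fun x => ∫ t in a..b, F (x, t)) := by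
  induction n with
  | zero =>
    intro G _ _ F hF
    have hc : Continuous F := hF.continuous
    refine contDiff_zero.2 ?_
    exact intervalIntegral.continuous_parametric_intervalIntegral_of_continuous'
      (f := fun x t => F (x, t)) hc a b
  | succ n ih =>
    intro G _ _ F hF
    have h1 : ContDiff ℝ 1 F := hF.of_le (by exact_mod_cast (le_top : (1 : ℕ∞) ≤ ⊤))
    have hd := hasFDerivAt_param F h1 a b
    push_cast
    refine contDiff_succ_iff_fderiv.2 ⟨fun x => (hd x).differentiableAt, by simp, ?_⟩
    have he : fderiv ℝ (fun x => ∫ t in a..b, F (x, t)) = fun x =>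
      ∫ t in a..b, (fderiv ℝ F (x, t)).comp (ContinuousLinearMap.inl ℝ E ℝ) :=
      funext fun x => (hd x).fderiv
    rw [he]
    exact ih (fun q : E × ℝ => (fderiv ℝ F q).comp (ContinuousLinearMap.inl ℝ E ℝ))
      ((contDiff_infty_iff_fderiv.1 hF).2.clm_comp contDiff_const)

lemma contDiff_param {E : Type} [NormedAddCommGroup E] [NormedSpace ℝ E] [ProperSpace E]
    (a b : ℝ) {G : Type} [NormedAddCommGroup G] [NormedSpace ℝ G]
    (F : E × ℝ → G) (hF : ContDiff ℝ (⊤ : ℕ∞) F) :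
    ContDiff ℝ (⊤ : ℕ∞) (fun x => ∫ t in a..b, F (x, t)) :=
  contDiff_infty.2 fun n => contDiff_param_nat a b n F hF

/-- Integral in `z` over a period. -/
def zint (f : ℝ × ℝ × ℝ → ℝ) (p : ℝ × ℝ × ℝ) : ℝ :=
  ∫ t in (0:ℝ)..(2 * Real.pi), f (p.1, p.2.1, t)

lemma zint_smooth {f : ℝ × ℝ × ℝ → ℝ} (hf : ContDiff ℝ (⊤ : ℕ∞) f) :
    ContDiff ℝ (⊤ : ℕ∞) (zint f) :=
  contDiff_param (E := ℝ × ℝ × ℝ) 0 (2 * Real.pi)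
    (fun q : (ℝ × ℝ × ℝ) × ℝ => f (q.1.1, q.1.2.1, q.2)) (hf.comp (by fun_prop))

lemma ddir_zint (v : ℝ × ℝ × ℝ) (hv : v.2.2 = 0)
    {f : ℝ × ℝ × ℝ → ℝ} (hf : ContDiff ℝ (⊤ : ℕ∞) f) :
    ddir v (zint f) = zint (ddir v f) := by
  funext p
  let F : (ℝ × ℝ × ℝ) × ℝ → ℝ := fun q => f (q.1.1, q.1.2.1, q.2)
  have hF : ContDiff ℝ (⊤ : ℕ∞) F := hf.comp (by fun_prop)
  have h1 : ContDiff ℝ 1 F := hF.of_le (by exact_mod_cast (le_top : (1 : ℕ∞) ≤ ⊤))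
  have h := (hasFDerivAt_param F h1 0 (2 * Real.pi) p).fderiv
  have hc' : Continuous (fun t : ℝ =>
      (fderiv ℝ F (p, t)).comp (ContinuousLinearMap.inl ℝ (ℝ × ℝ × ℝ) ℝ)) :=
    ((h1.continuous_fderiv one_ne_zero).comp (by fun_prop)).clm_comp continuous_const
  have e : ddir v (zint f) p = (∫ t in (0:ℝ)..(2 * Real.pi),
      (fderiv ℝ F (p, t)).comp (ContinuousLinearMap.inl ℝ (ℝ × ℝ × ℝ) ℝ)) v := by
    rw [← h]; rfl
  rw [e, ContinuousLinearMap.intervalIntegral_apply (hc'.intervalIntegrable _ _)]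
  unfold zint
  congr 1
  funext t
  let L : (ℝ × ℝ × ℝ) × ℝ →L[ℝ] ℝ × ℝ × ℝ :=
    ((ContinuousLinearMap.fst ℝ ℝ (ℝ × ℝ)).comp (ContinuousLinearMap.fst ℝ _ _)).prod
      ((((ContinuousLinearMap.fst ℝ ℝ ℝ).comp (ContinuousLinearMap.snd ℝ ℝ (ℝ × ℝ))).comp
        (ContinuousLinearMap.fst ℝ _ _)).prod (ContinuousLinearMap.snd ℝ _ _))
  have h2 : HasFDerivAt F ((fderiv ℝ f (p.1, p.2.1, t)).comp L) (p, t) := by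
    have h3 : HasFDerivAt f (fderiv ℝ f (L (p, t))) (L (p, t)) :=
      (hf.differentiable (by simp) _).hasFDerivAt
    exact h3.comp (p, t) L.hasFDerivAt
  rw [h2.fderiv]
  obtain ⟨v1, v2, v3⟩ := v
  simp only at hv
  subst hv
  rfl

/-- derivative along the third coordinate, as a one-variable derivative. -/
lemma hasDerivAt_z {f : ℝ × ℝ × ℝ → ℝ} (hf : ContDiff ℝ (⊤ : ℕ∞) f) (x y z : ℝ) :
    HasDerivAt (fun s => f (x, y, s)) (ddir (0, 0, 1) f (x, y, z)) z := by
  have h3 : HasFDerivAt f (fderiv ℝ f (x, y, z)) (x, y, z) :=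
    (hf.differentiable (by simp) _).hasFDerivAt
  have h4 : HasDerivAt (fun s : ℝ => (x, y, s)) (0, 0, 1) z :=
    (hasDerivAt_const z x).prodMk ((hasDerivAt_const z y).prodMk (hasDerivAt_id z))
  exact h3.comp_hasDerivAt z h4

/-- The primitive in `z`. -/
def zprim (f : ℝ × ℝ × ℝ → ℝ) (p : ℝ × ℝ × ℝ) : ℝ :=
  ∫ t in (0:ℝ)..p.2.2, f (p.1, p.2.1, t)

lemma zprim_smooth {f : ℝ × ℝ × ℝ → ℝ} (hf : ContDiff ℝ (⊤ : ℕ∞) f) :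
    ContDiff ℝ (⊤ : ℕ∞) (zprim f) := by
  have h : zprim f = fun p : ℝ × ℝ × ℝ =>
      p.2.2 * ∫ t in (0:ℝ)..1, f (p.1, p.2.1, t * p.2.2) := by
    funext p
    rw [intervalIntegral.mul_integral_comp_mul_right (f := fun t => f (p.1, p.2.1, t))]
    simp [zprim]
  rw [h]
  refine ContDiff.mul (by fun_prop) ?_
  exact contDiff_param (E := ℝ × ℝ × ℝ) 0 1
    (fun q : (ℝ × ℝ × ℝ) × ℝ => f (q.1.1, q.1.2.1, q.2 * q.1.2.2)) (hf.comp (by fun_prop))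

lemma ddir_z_zprim {f : ℝ × ℝ × ℝ → ℝ} (hf : ContDiff ℝ (⊤ : ℕ∞) f) :
    ddir (0, 0, 1) (zprim f) = f := by
  funext ⟨x, y, z⟩
  have h1 := hasDerivAt_z (zprim_smooth hf) x y z
  have hc : Continuous (fun t : ℝ => f (x, y, t)) := hf.continuous.comp (by fun_prop)
  have h2 : HasDerivAt (fun s => zprim f (x, y, s)) (f (x, y, z)) z :=
    intervalIntegral.integral_hasDerivAt_right (hc.intervalIntegrable _ _)
      hc.stronglyMeasurable.stronglyMeasurableAtFilter hc.continuousAt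
  exact h1.unique h2

lemma ddir_z_zint {f : ℝ × ℝ × ℝ → ℝ} (hf : ContDiff ℝ (⊤ : ℕ∞) f) :
    ddir (0, 0, 1) (zint f) = 0 := by
  funext ⟨x, y, z⟩
  have h1 := hasDerivAt_z (zint_smooth hf) x y z
  have h2 : HasDerivAt (fun s => zint f (x, y, s)) 0 z :=
    hasDerivAt_const z (zint f (x, y, z))
  exact h1.unique h2

lemma ddir_add (v : ℝ × ℝ × ℝ) {f g : ℝ × ℝ × ℝ → ℝ} (hf : ContDiff ℝ (⊤ : ℕ∞) f)
    (hg : ContDiff ℝ (⊤ : ℕ∞) g) : ddir v (f + g) = ddir v f + ddir v g := by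
  funext p
  unfold ddir
  rw [fderiv_add (hf.differentiable (by simp) _) (hg.differentiable (by simp) _)]
  rfl

lemma ddir_smul (v : ℝ × ℝ × ℝ) (c : ℝ) {f : ℝ × ℝ × ℝ → ℝ} (hf : ContDiff ℝ (⊤ : ℕ∞) f) :
    ddir v (c • f) = c • ddir v f := by
  funext p
  unfold ddir
  rw [fderiv_const_smul (hf.differentiable (by simp) _)]
  rfl

lemma zint_add {f g : ℝ × ℝ × ℝ → ℝ} (hf : ContDiff ℝ (⊤ : ℕ∞) f)
    (hg : ContDiff ℝ (⊤ : ℕ∞) g) : zint (f + g) = zint f + zint g := by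
  funext p
  have h1 : Continuous (fun t : ℝ => f (p.1, p.2.1, t)) := hf.continuous.comp (by fun_prop)
  have h2 : Continuous (fun t : ℝ => g (p.1, p.2.1, t)) := hg.continuous.comp (by fun_prop)
  exact intervalIntegral.integral_add (h1.intervalIntegrable _ _) (h2.intervalIntegrable _ _)

/-- Every smooth, doubly periodic harmonic potential `φ` with zero `z`-mean is the
`z`-derivative of a smooth, doubly periodic harmonic function `H` with zero `z`-mean
(the representation `φ⁽¹⁾ = ∂_z H⁽¹⁾`). -/
theorem statement2 (φ : ℝ × ℝ × ℝ → ℝ) (hφ : ContDiff ℝ (⊤ : ℕ∞) φ)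
    (hharm : ∀ p : ℝ × ℝ × ℝ, pdx (pdx φ) p + pdy (pdy φ) p + pdz (pdz φ) p = 0)
    (hpery : ∀ x y z : ℝ, φ (x, y + 2 * Real.pi, z) = φ (x, y, z))
    (hperz : ∀ x y z : ℝ, φ (x, y, z + 2 * Real.pi) = φ (x, y, z))
    (havg : ∀ x y : ℝ, (∫ z in (0:ℝ)..(2 * Real.pi), φ (x, y, z)) = 0) :
    ∃ H : ℝ × ℝ × ℝ → ℝ, ContDiff ℝ (⊤ : ℕ∞) H ∧
      (∀ p : ℝ × ℝ × ℝ, pdx (pdx H) p + pdy (pdy H) p + pdz (pdz H) p = 0) ∧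
      (∀ x y z : ℝ, H (x, y + 2 * Real.pi, z) = H (x, y, z)) ∧
      (∀ x y z : ℝ, H (x, y, z + 2 * Real.pi) = H (x, y, z)) ∧
      (∀ p : ℝ × ℝ × ℝ, pdz H p = φ p) ∧
      (∀ x y : ℝ, (∫ z in (0:ℝ)..(2 * Real.pi), H (x, y, z)) = 0) := by
  have hpi : (2 * Real.pi) ≠ 0 := by positivity
  let M : ℝ × ℝ × ℝ → ℝ := (-(2 * Real.pi)⁻¹) • zint (zprim φ)
  let H : ℝ × ℝ × ℝ → ℝ := zprim φ + M
  have hG := zprim_smooth hφ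
  have hA := zint_smooth hG
  have hM : ContDiff ℝ (⊤ : ℕ∞) M := contDiff_const.smul hA
  have hH : ContDiff ℝ (⊤ : ℕ∞) H := hG.add hM
  have hHz : ddir (0, 0, 1) H = φ := by
    change ddir (0, 0, 1) (zprim φ + (-(2 * Real.pi)⁻¹) • zint (zprim φ)) = φ
    rw [ddir_add _ hG hM, ddir_smul _ _ hA, ddir_z_zprim hφ, ddir_z_zint hG]
    simp
  have hHint : zint H = 0 := by
    change zint (zprim φ + M) = 0
    rw [zint_add hG hM]
    funext p
    have : zint M p = (2 * Real.pi) * (-(2 * Real.pi)⁻¹ * zint (zprim φ) p) := by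
      have : zint M p = ∫ t in (0:ℝ)..(2 * Real.pi), (-(2 * Real.pi)⁻¹ * zint (zprim φ) p) := rfl
      rw [this, intervalIntegral.integral_const]
      simp
    rw [Pi.add_apply, this, Pi.zero_apply]
    field_simp
    ring
  have hHpz : ∀ x y z : ℝ, H (x, y, z + 2 * Real.pi) = H (x, y, z) := by
    intro x y z
    have hc : Continuous (fun t : ℝ => φ (x, y, t)) := hφ.continuous.comp (by fun_prop)
    have h1 : zprim φ (x, y, z + 2 * Real.pi) = zprim φ (x, y, z) := by
      have hp : Function.Periodic (fun t : ℝ => φ (x, y, t)) (2 * Real.pi) :=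
        fun t => hperz x y t
      have h2 := hp.intervalIntegral_add_eq z 0
      rw [zero_add, havg] at h2
      have h3 := intervalIntegral.integral_add_adjacent_intervals
        (hc.intervalIntegrable (μ := MeasureTheory.volume) 0 z)
        (hc.intervalIntegrable z (z + 2 * Real.pi))
      rw [h2, add_zero] at h3
      exact h3.symm
    change zprim φ (x, y, z + 2 * Real.pi) + M (x, y, z) = zprim φ (x, y, z) + M (x, y, z)
    rw [h1]
  let K : ℝ × ℝ × ℝ → ℝ := ddir (1, 0, 0) (ddir (1, 0, 0) H) + ddir (0, 1, 0) (ddir (0, 1, 0) H)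
    + ddir (0, 0, 1) (ddir (0, 0, 1) H)
  have s1 := ddir_smooth (1, 0, 0) (ddir_smooth (1, 0, 0) hH)
  have s2 := ddir_smooth (0, 1, 0) (ddir_smooth (0, 1, 0) hH)
  have s3 := ddir_smooth (0, 0, 1) (ddir_smooth (0, 0, 1) hH)
  have s12 : ContDiff ℝ (⊤ : ℕ∞) (ddir (1, 0, 0) (ddir (1, 0, 0) H)
    + ddir (0, 1, 0) (ddir (0, 1, 0) H)) := s1.add s2
  have hK : ContDiff ℝ (⊤ : ℕ∞) K := (s1.add s2).add s3
  have hKz : ddir (0, 0, 1) K = 0 := by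
    have e : ∀ v, ddir (0, 0, 1) (ddir v (ddir v H)) = ddir v (ddir v φ) := by
      intro v
      rw [ddir_comm _ _ (ddir_smooth v hH), ddir_comm (0, 0, 1) v hH, hHz]
    change ddir (0, 0, 1) (_ + _ + _) = 0
    rw [ddir_add _ s12 s3, ddir_add _ s1 s2, e, e, e]
    funext p
    exact hharm p
  have hzero : ∀ v : ℝ × ℝ × ℝ, ddir v (0 : ℝ × ℝ × ℝ → ℝ) = 0 := by
    intro v
    funext p
    simp [ddir]
  have hKint : zint K = 0 := by
    change zint (_ + _ + _) = 0
    rw [zint_add s12 s3, zint_add s1 s2,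
      ← ddir_zint (1, 0, 0) rfl (ddir_smooth _ hH), ← ddir_zint (0, 1, 0) rfl (ddir_smooth _ hH),
      ← ddir_zint (1, 0, 0) rfl hH, ← ddir_zint (0, 1, 0) rfl hH, hHint, hzero, hzero, hzero, hzero, hHz]
    funext p
    have h2 : zint (ddir (0, 0, 1) φ) p = φ (p.1, p.2.1, 2 * Real.pi) - φ (p.1, p.2.1, 0) := by
      have hc : Continuous (fun t : ℝ => ddir (0, 0, 1) φ (p.1, p.2.1, t)) :=
        (ddir_smooth _ hφ).continuous.comp (by fun_prop)
      exact intervalIntegral.integral_eq_sub_of_hasDerivAt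
        (fun t _ => hasDerivAt_z hφ p.1 p.2.1 t) (hc.intervalIntegrable _ _)
    have h3 := hperz p.1 p.2.1 0
    rw [zero_add] at h3
    simp [h2, h3]
  have hK0 : ∀ p, K p = 0 := by
    rintro ⟨x, y, z⟩
    have hd : ∀ t, HasDerivAt (fun s => K (x, y, s)) 0 t := by
      intro t
      have := hasDerivAt_z hK x y t
      rwa [hKz] at this
    have hcst : ∀ t, K (x, y, t) = K (x, y, z) := fun t =>
      is_const_of_deriv_eq_zero (fun t => (hd t).differentiableAt) (fun t => (hd t).deriv) t z
    have h1 : zint K (x, y, z) = 0 := by rw [hKint]; rfl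
    unfold zint at h1
    simp only [hcst] at h1
    rw [intervalIntegral.integral_const, sub_zero, smul_eq_mul] at h1
    exact (mul_eq_zero.1 h1).resolve_left hpi
  refine ⟨H, hH, hK0, ?_, hHpz, fun p => congrFun hHz p, ?_⟩
  · intro x y z
    have h1 : ∀ t, zprim φ (x, y + 2 * Real.pi, t) = zprim φ (x, y, t) := by
      intro t
      simp only [zprim, hpery]
    have h2 : zint (zprim φ) (x, y + 2 * Real.pi, z) = zint (zprim φ) (x, y, z) := by
      simp only [zint, h1]
    simp only [H, M, Pi.add_apply, Pi.smul_apply, h1, h2]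
  · intro x y
    exact congrFun hHint (x, y, 0)
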